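/- Let 1 < p < q, M ≥ 1, and let f : [0,1) → (0,∞) be non-decreasing, bounded below by some ε > 0, and satisfying ((1/t) ∫_0^t f)·((1/t) ∫_0^t f^{-1/(q-1)})^{q-1} ≤ M for every t ∈ (0,1]. Set c = M^{1/(q-1)} and K = 1 − p^{1/(q-1)}·((q−p)/(q−1))·c. Then for every t ∈ (0,1]: K · (1/t) ∫_0^t f(s)^{-1/(q-1)} ((1/s) ∫_0^s f)^{-1/(p-1)+1/(q-1)} ds ≤ M^{1/(p-1)} · ((p−1)/(q−1)) · c^{-(q-p)/(p-1)} · ((1/t) ∫_0^t f)^{-1/(p-1)}. -/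

import Mathlib

open MeasureTheory Set intervalIntegral

lemma tangent_aux (α y : ℝ) (hα : 0 < α) (hy : 0 < y) : 1 - α * (y - 1) ≤ y ^ (-α) := by
  rw [Real.rpow_def_of_pos hy]
  have h1 := Real.add_one_le_exp (Real.log y * (-α))
  have h2 := Real.log_le_sub_one_of_pos hy
  nlinarith

lemma pointwise_aux (α β δ p c f F G : ℝ) (hα : 0 < α) (hδ : 0 < δ) (hβ : β = α + δ)
    (hp : p = 1 + 1 / β) (hc : 0 < c) (hF : 0 < F) (hf : F ≤ f) (hG : G ≤ c * F ^ (-α)) :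
    (1 - p ^ α * (δ / β) * c) * (f ^ (-α) * F ^ (-δ)) ≤
      f ^ (-α) * F ^ (-δ) - δ * G * F ^ (-δ - 1) * (f - F)
      - (c * (δ / β) * (1 + α / (p * β))) * (F ^ (-β) - β * F ^ (-β - 1) * (f - F)) := by
  have hβ0 : 0 < β := by linarith
  have hp0 : 0 < p := by rw [hp]; positivity
  obtain ⟨x, hx⟩ : ∃ x, f = x * F := ⟨f / F, by field_simp⟩
  have hx1 : 1 ≤ x := by
    by_contra h
    push Not at h
    nlinarith
  have hx0 : 0 < x := by linarith
  have e1 : f ^ (-α) * F ^ (-δ) = x ^ (-α) * F ^ (-β) := by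
    rw [hx, Real.mul_rpow hx0.le hF.le, mul_assoc, ← Real.rpow_add hF, hβ]
    ring_nf
  have e2 : F ^ (-β - 1) * (f - F) = F ^ (-β) * (x - 1) := by
    rw [hx, Real.rpow_sub_one hF.ne']
    field_simp
  have e3 : G * F ^ (-δ - 1) * (f - F) ≤ c * (F ^ (-β) * (x - 1)) := by
    rw [← e2]
    have : F ^ (-β - 1) = F ^ (-α) * F ^ (-δ - 1) := by
      rw [← Real.rpow_add hF, hβ]; ring_nf
    rw [this]
    have h0 : 0 ≤ F ^ (-δ - 1) * (f - F) := mul_nonneg (by positivity) (by linarith)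
    have := mul_le_mul_of_nonneg_right hG h0
    linarith
  have hu : 0 < F ^ (-β) := by positivity
  have htan := tangent_aux α (x / p) hα (by positivity)
  have e4 : (x / p) ^ (-α) = p ^ α * x ^ (-α) := by
    rw [Real.div_rpow hx0.le hp0.le, Real.rpow_neg hp0.le]
    field_simp
  rw [e4] at htan
  have e5 : 1 - α * (x / p - 1) = β * (x - 1) + (1 + α / (p * β)) * (1 - β * (x - 1)) := by
    have : x / p - 1 = (x - 1) / p - 1 / (p * β) := by
      have : p * β = β + 1 := by rw [hp]; field_simp
      field_simp
      nlinarith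
    rw [this]
    field_simp
    ring
  rw [e5] at htan
  rw [e1]
  have k : 0 ≤ c * (δ / β) * F ^ (-β) := by positivity
  have h6 := mul_le_mul_of_nonneg_left htan k
  have h7 := mul_le_mul_of_nonneg_left e3 hδ.le
  have e8 : δ * (c * (F ^ (-β) * (x - 1))) = c * (δ / β) * F ^ (-β) * (β * (x - 1)) := by
    field_simp
  have e9 : β * F ^ (-β - 1) * (f - F) = β * (F ^ (-β) * (x - 1)) := by rw [← e2]; ring
  rw [e9]
  nlinarith

lemma core_aux (α β δ p c ε t : ℝ) (hα : 0 < α) (hδ : 0 < δ) (hβ : β = α + δ)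
    (hp : p = 1 + 1 / β) (hc : 0 < c) (hε : 0 < ε) (ht : 0 < t)
    (f F G : ℝ → ℝ) (S : Set ℝ) (hS : S.Countable) (hfm : Measurable f)
    (hfi : IntegrableOn f (Ioo 0 t))
    (hFc : ContinuousOn F (Ioc 0 t)) (hGc : ContinuousOn G (Ioc 0 t))
    (hFε : ∀ s ∈ Ioc 0 t, ε ≤ F s) (hFf : ∀ s ∈ Ioo 0 t, F s ≤ f s)
    (hG0 : ∀ s ∈ Ioc 0 t, 0 ≤ G s)
    (hG : ∀ s ∈ Ioc 0 t, G s ≤ c * F s ^ (-α))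
    (hFd : ∀ s ∈ Ioo 0 t \ S, HasDerivAt F ((f s - F s) / s) s)
    (hGd : ∀ s ∈ Ioo 0 t \ S, HasDerivAt (fun s => s * G s) (f s ^ (-α)) s) :
    (1 - p ^ α * (δ / β) * c) * ∫ s in (0 : ℝ)..t, f s ^ (-α) * F s ^ (-δ) ≤
      t * (c * (α / β) * F t ^ (-β)) := by
  have hβ0 : 0 < β := by linarith
  have hp0 : 0 < p := by rw [hp]; positivity
  set κ := c * (δ / β) * (1 + α / (p * β)) with hκ
  have hIoo : Ioo 0 t ⊆ Ioc 0 t := Ioo_subset_Ioc_self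
  have hF0 : ∀ s ∈ Ioc 0 t, 0 < F s := fun s hs => hε.trans_le (hFε s hs)
  have hpow : ∀ r : ℝ, 0 ≤ r → ∀ s ∈ Ioc 0 t, ‖F s ^ (-r)‖ ≤ ε ^ (-r) := by
    intro r hr s hs
    rw [Real.norm_of_nonneg (Real.rpow_nonneg (hF0 s hs).le _)]
    exact Real.rpow_le_rpow_of_nonpos hε (hFε s hs) (by linarith)
  have hGb : ∀ s ∈ Ioc 0 t, ‖G s‖ ≤ c * ε ^ (-α) := by
    intro s hs
    rw [Real.norm_of_nonneg (hG0 s hs)]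
    refine (hG s hs).trans (mul_le_mul_of_nonneg_left ?_ hc.le)
    exact Real.rpow_le_rpow_of_nonpos hε (hFε s hs) (by linarith)
  have hFpc : ∀ r : ℝ, ContinuousOn (fun s => F s ^ r) (Ioc 0 t) := fun r =>
    hFc.rpow_const (fun s hs => Or.inl (hF0 s hs).ne')
  have hms : ∀ {h : ℝ → ℝ}, ContinuousOn h (Ioc 0 t) →
      AEStronglyMeasurable h (volume.restrict (Ioo 0 t)) := fun hh =>
    (hh.mono hIoo).aestronglyMeasurable measurableSet_Ioo
  have hae : ∀ {P : ℝ → Prop}, (∀ s ∈ Ioo 0 t, P s) →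
      ∀ᵐ s ∂(volume.restrict (Ioo 0 t)), P s := fun h =>
    (ae_restrict_iff' measurableSet_Ioo).2 (Filter.Eventually.of_forall h)
  have hone : IntegrableOn (fun _ : ℝ => (1 : ℝ)) (Ioo 0 t) := by
    simp
  -- integrability
  have i1 : IntegrableOn (fun s => F s ^ (-δ)) (Ioo 0 t) := by
    have := hone.bdd_mul (hms (hFpc (-δ))) (hae fun s hs => hpow δ hδ.le s (hIoo hs))
    simpa [IntegrableOn] using this
  have i2 : IntegrableOn (fun s => F s ^ (-β)) (Ioo 0 t) := by
    have := hone.bdd_mul (hms (hFpc (-β))) (hae fun s hs => hpow β hβ0.le s (hIoo hs))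
    simpa [IntegrableOn] using this
  have i3 : IntegrableOn (fun s => f s ^ (-α) * F s ^ (-δ)) (Ioo 0 t) := by
    refine Integrable.bdd_mul (c := ε ^ (-α)) i1 (hfm.pow_const _).aestronglyMeasurable (hae fun s hs => ?_)
    have h1 := hFε s (hIoo hs)
    have h2 := hFf s hs
    rw [Real.norm_of_nonneg (Real.rpow_nonneg (by linarith) _)]
    exact Real.rpow_le_rpow_of_nonpos hε (by linarith) (by linarith)
  have i4 : IntegrableOn (fun s => f s - F s) (Ioo 0 t) := by
    refine Integrable.mono' hfi (hfm.aestronglyMeasurable.sub (hms hFc)) (hae fun s hs => ?_)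
    have h1 := hF0 s (hIoo hs)
    have h2 := hFf s hs
    rw [Real.norm_of_nonneg (by linarith)]
    linarith
  have i5 : IntegrableOn (fun s => F s ^ (-β - 1) * (f s - F s)) (Ioo 0 t) := by
    refine Integrable.bdd_mul (c := ε ^ (-(β + 1))) i4 (hms (hFpc _)) (hae fun s hs => ?_)
    have := hpow (β + 1) (by linarith) s (hIoo hs)
    rwa [neg_add'] at this ⊢
  have i6 : IntegrableOn (fun s => F s ^ (-δ - 1) * (f s - F s)) (Ioo 0 t) := by
    refine Integrable.bdd_mul (c := ε ^ (-(δ + 1))) i4 (hms (hFpc _)) (hae fun s hs => ?_)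
    have := hpow (δ + 1) (by linarith) s (hIoo hs)
    rwa [neg_add'] at this ⊢
  have i7 : IntegrableOn (fun s => G s * (F s ^ (-δ - 1) * (f s - F s))) (Ioo 0 t) :=
    Integrable.bdd_mul (c := c * ε ^ (-α)) i6 (hms hGc) (hae fun s hs => hGb s (hIoo hs))
  set W' : ℝ → ℝ := fun s => f s ^ (-α) * F s ^ (-δ) - δ * G s * F s ^ (-δ - 1) * (f s - F s)
      - κ * (F s ^ (-β) - β * F s ^ (-β - 1) * (f s - F s)) with hW'
  have iW : IntegrableOn W' (Ioo 0 t) := by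
    have := (Integrable.sub i3 (Integrable.const_mul i7 δ)).sub
      ((Integrable.sub i2 (Integrable.const_mul i5 β)).const_mul κ)
    refine this.congr (Filter.Eventually.of_forall fun s => ?_)
    simp only [hW', Pi.sub_apply]
    ring
  have iW2 : IntervalIntegrable W' volume 0 t :=
    (intervalIntegrable_iff_integrableOn_Ioo_of_le ht.le).2 iW
  have i3' : IntervalIntegrable (fun s => f s ^ (-α) * F s ^ (-δ)) volume 0 t :=
    (intervalIntegrable_iff_integrableOn_Ioo_of_le ht.le).2 i3
  set V : ℝ → ℝ := fun s => G s * F s ^ (-δ) - κ * F s ^ (-β) with hV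
  have hVc : ContinuousOn V (Ioc 0 t) :=
    (hGc.mul (hFpc _)).sub (continuousOn_const.mul (hFpc _))
  obtain ⟨C, hC⟩ : ∃ C, ∀ s ∈ Ioc 0 t, ‖V s‖ ≤ C := by
    refine ⟨c * ε ^ (-α) * ε ^ (-δ) + ‖κ‖ * ε ^ (-β), fun s hs => ?_⟩
    refine (norm_sub_le _ _).trans ?_
    rw [norm_mul, norm_mul]
    have h1 := hGb s hs
    have h2 := hpow δ hδ.le s hs
    have h3 := hpow β hβ0.le s hs
    gcongr
  have hWc : ContinuousOn (fun s => s * V s) (Icc 0 t) := by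
    intro s hs
    rcases eq_or_lt_of_le hs.1 with h | h
    · subst h
      have hlim : Filter.Tendsto (fun s : ℝ => C * |s|) (nhdsWithin 0 (Icc 0 t)) (nhds 0) := by
        have : Continuous (fun s : ℝ => C * |s|) := by fun_prop
        have := this.tendsto 0
        simp only [abs_zero, mul_zero] at this
        exact this.mono_left nhdsWithin_le_nhds
      unfold ContinuousWithinAt
      simp only [zero_mul]
      refine squeeze_zero_norm' ?_ hlim
      filter_upwards [self_mem_nhdsWithin] with s hs
      rcases eq_or_lt_of_le hs.1 with h | h
      · subst h; simp
      · rw [norm_mul, mul_comm, Real.norm_eq_abs s]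
        exact mul_le_mul_of_nonneg_right (hC s ⟨h, hs.2⟩) (abs_nonneg _)
    · have h1 : ContinuousWithinAt V (Ioc 0 t) s := hVc s ⟨h, hs.2⟩
      have h2 : ContinuousWithinAt V (Icc 0 t) s := by
        refine h1.mono_of_mem_nhdsWithin ?_
        have : Ioi (0:ℝ) ∈ nhds s := Ioi_mem_nhds h
        filter_upwards [self_mem_nhdsWithin, mem_nhdsWithin_of_mem_nhds this] with x hx hx'
        exact ⟨hx', hx.2⟩
      exact continuousWithinAt_id.mul h2
  have hderiv : ∀ s ∈ Ioo 0 t \ S, HasDerivAt (fun s => s * V s) (W' s) s := by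
    intro s hs
    have hs0 : s ≠ 0 := hs.1.1.ne'
    have hFs := hF0 s (hIoo hs.1)
    have hd := hFd s hs
    have dA := (hGd s hs).mul (hd.rpow_const (p := -δ) (Or.inl hFs.ne'))
    have dB := ((hasDerivAt_id s).mul (hd.rpow_const (p := -β) (Or.inl hFs.ne'))).const_mul κ
    have := dA.sub dB
    refine (this.congr_of_eventuallyEq (Filter.Eventually.of_forall fun x => ?_)).congr_deriv ?_
    · simp [hV]; ring
    · simp only [hW', id]
      field_simp
      ring
  have hFTC := integral_eq_of_hasDerivAt_off_countable_of_le (fun s => s * V s) W' ht.le hS hWc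
    hderiv iW2
  have hle : ∫ s in (0:ℝ)..t, (1 - p ^ α * (δ / β) * c) * (f s ^ (-α) * F s ^ (-δ))
      ≤ ∫ s in (0:ℝ)..t, W' s := by
    refine integral_mono_on_of_le_Ioo ht.le (i3'.const_mul _) iW2 fun s hs => ?_
    exact pointwise_aux α β δ p c (f s) (F s) (G s) hα hδ hβ hp hc (hF0 s (hIoo hs)) (hFf s hs)
      (hG s (hIoo hs))
  rw [intervalIntegral.integral_const_mul, hFTC] at hle
  refine hle.trans ?_
  simp only [zero_mul, sub_zero, hV]
  refine mul_le_mul_of_nonneg_left ?_ ht.le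
  have htt : t ∈ Ioc 0 t := ⟨ht, le_rfl⟩
  have hFt := hF0 t htt
  have h1 : G t * F t ^ (-δ) ≤ c * F t ^ (-β) := by
    have := mul_le_mul_of_nonneg_right (hG t htt) (Real.rpow_nonneg hFt.le (-δ))
    rwa [mul_assoc, ← Real.rpow_add hFt, ← neg_add, ← hβ] at this
  have h2 : c * (δ / β) ≤ κ := by
    rw [hκ]
    have : 0 ≤ α / (p * β) := by positivity
    have h3 : 0 ≤ c * (δ / β) := by positivity
    nlinarith
  have h3 : α / β = 1 - δ / β := by rw [hβ]; field_simp; ring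
  have hu : 0 < F t ^ (-β) := by positivity
  have := mul_le_mul_of_nonneg_right h2 hu.le
  rw [h3]
  linarith

lemma integrable_aux (q M : ℝ) (hq : 1 < q)
    (f : ℝ → ℝ) 
    (hmono : MonotoneOn f (Set.Ico 0 1))
    (hpos : ∀ x ∈ Set.Ico (0 : ℝ) 1, 0 < f x)
    (hgi : IntervalIntegrable (fun y => f y ^ (-(1 / (q - 1)))) volume 0 1)
    (hAq : ∀ t ∈ Set.Ioc (0 : ℝ) 1,
      ((1 / t) * ∫ y in (0 : ℝ)..t, f y) *
        ((1 / t) * ∫ y in (0 : ℝ)..t, f y ^ (-(1 / (q - 1)))) ^ (q - 1) ≤ M) :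
    IntegrableOn f (Ioc 0 1) := by
  set α := 1 / (q - 1) with hα
  have hα0 : 0 < α := by rw [hα]; have : 0 < q - 1 := by linarith
                         positivity
  have hfi : ∀ t, 0 ≤ t → t < 1 → IntervalIntegrable f volume 0 t := by
    intro t h0 h1
    apply MonotoneOn.intervalIntegrable
    rw [uIcc_of_le h0]
    exact hmono.mono fun x hx => ⟨hx.1, hx.2.trans_lt h1⟩
  have hhalf : 0 < f (1/2) := hpos _ (by norm_num)
  set m := 1 / 2 * f (1/2) ^ (-α) with hm
  have hm0 : 0 < m := by positivity
  have hgm : ∀ t, 1/2 ≤ t → t < 1 → m ≤ ∫ y in (0:ℝ)..t, f y ^ (-α) := by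
    intro t h0 h1
    have hsub : ∀ u, 0 ≤ u → u ≤ 1 → IntervalIntegrable (fun y => f y ^ (-α)) volume 0 u := by
      intro u hu0 hu1
      refine hgi.mono_set ?_
      rw [uIcc_of_le hu0, uIcc_of_le zero_le_one]
      exact Icc_subset_Icc_right hu1
    have a1 : ∫ y in (0:ℝ)..(1/2), f (1/2) ^ (-α) ≤ ∫ y in (0:ℝ)..(1/2), f y ^ (-α) := by
      refine integral_mono_on_of_le_Ioo (by norm_num) (by simp) (hsub _ (by norm_num) (by norm_num)) ?_
      intro x hx
      have hx' : x ∈ Ico (0:ℝ) 1 := ⟨hx.1.le, by linarith [hx.2]⟩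
      exact Real.rpow_le_rpow_of_nonpos (hpos x hx')
        (hmono hx' (by norm_num) hx.2.le) (by linarith)
    have a2 : ∫ y in (0:ℝ)..(1/2), f y ^ (-α) ≤ ∫ y in (0:ℝ)..t, f y ^ (-α) := by
      refine integral_mono_interval le_rfl (by norm_num) h0 ?_ (hsub t (by linarith) h1.le)
      refine (ae_restrict_iff' measurableSet_Ioc).2 (Filter.Eventually.of_forall fun x hx => ?_)
      exact Real.rpow_nonneg (hpos x ⟨hx.1.le, hx.2.trans_lt h1⟩).le _
    rw [intervalIntegral.integral_const] at a1
    simp only [sub_zero, smul_eq_mul] at a1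
    linarith
  have hb : ∀ t, 1/2 ≤ t → t < 1 → ∫ y in (0:ℝ)..t, f y ≤ M / m ^ (q - 1) := by
    intro t h0 h1
    have ht0 : 0 < t := by linarith
    have h := hAq t ⟨ht0, h1.le⟩
    have ht1 : 1 ≤ 1 / t := by rw [le_div_iff₀ ht0]; linarith
    have hI0 : 0 ≤ ∫ y in (0:ℝ)..t, f y := by
      apply intervalIntegral.integral_nonneg ht0.le
      intro x hx
      exact (hpos x ⟨hx.1, hx.2.trans_lt h1⟩).le
    have hg := hgm t h0 h1
    rw [le_div_iff₀ (by positivity)]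
    refine le_trans ?_ h
    have e1 : ∫ y in (0:ℝ)..t, f y ≤ 1 / t * ∫ y in (0:ℝ)..t, f y := by nlinarith
    have e2 : m ≤ 1 / t * ∫ y in (0:ℝ)..t, f y ^ (-α) := by nlinarith
    have e3 : m ^ (q - 1) ≤ (1 / t * ∫ y in (0:ℝ)..t, f y ^ (-α)) ^ (q - 1) :=
      Real.rpow_le_rpow hm0.le e2 (by linarith)
    exact mul_le_mul e1 e3 (by positivity) (hI0.trans e1)
  have hbn : ∀ n : ℕ, 1/2 ≤ 1 - 1 / ((n:ℝ) + 2) ∧ 1 - 1 / ((n:ℝ) + 2) < 1 := by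
    intro n
    have : 1 / ((n:ℝ) + 2) ≤ 1 / 2 := by
      apply one_div_le_one_div_of_le <;> linarith [Nat.cast_nonneg (α := ℝ) n]
    have h2 : 0 < 1 / ((n:ℝ) + 2) := by positivity
    constructor <;> linarith
  refine integrableOn_Ioc_of_intervalIntegral_norm_bounded_right (l := Filter.atTop)
    (b := fun n : ℕ => 1 - 1 / ((n:ℝ) + 2)) (I := M / m ^ (q - 1)) ?_ ?_ ?_
  · intro n
    obtain ⟨h1, h2⟩ := hbn n
    exact (intervalIntegrable_iff_integrableOn_Ioc_of_le (by linarith)).1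
      (hfi _ (by linarith) h2)
  · have h : Filter.Tendsto (fun n : ℕ => 1 / ((n:ℝ) + 2)) Filter.atTop (nhds 0) := by
      have : Filter.Tendsto (fun n : ℕ => (n:ℝ) + 2) Filter.atTop Filter.atTop :=
        Filter.tendsto_atTop_add_const_right _ _ tendsto_natCast_atTop_atTop
      simp only [one_div]
      exact this.inv_tendsto_atTop
    simpa using (tendsto_const_nhds (x := (1:ℝ))).sub h
  · refine Filter.Eventually.of_forall fun n => ?_
    obtain ⟨h1, h2⟩ := hbn n
    refine le_trans (le_of_eq ?_) (hb _ h1 h2)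
    rw [integral_of_le (by linarith)]
    refine setIntegral_congr_fun measurableSet_Ioc fun x hx => ?_
    exact Real.norm_of_nonneg (hpos x ⟨hx.1.le, hx.2.trans_lt h2⟩).le

/-- **Inequality (3.5).** Let `1 < p < q`, `M ≥ 1`, and let `f : [0,1) → (0,∞)` be
non-decreasing, bounded below by `ε > 0`, satisfying the `A_q` condition with constant
`M` on each `(0,t)`, `t ∈ (0,1]`. With `c = M^{1/(q-1)}` and
`K = 1 − p^{1/(q-1)}((q−p)/(q−1))c`, for every `t ∈ (0,1]`,
`K (1/t) ∫_0^t f(s)^{-1/(q-1)} ((1/s)∫_0^s f)^{-1/(p-1)+1/(q-1)} ds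
  ≤ M^{1/(p-1)} ((p−1)/(q−1)) c^{-(q-p)/(p-1)} ((1/t)∫_0^t f)^{-1/(p-1)}`. -/
theorem key_inequality_two (p q ε M : ℝ) (hp : 1 < p) (hpq : p < q) (hε : 0 < ε)
    (hM : 1 ≤ M) (f : ℝ → ℝ) (hfm : Measurable f)
    (hmono : MonotoneOn f (Set.Ico 0 1))
    (hlb : ∀ x ∈ Set.Ico (0 : ℝ) 1, ε ≤ f x)
    (hpos : ∀ x ∈ Set.Ico (0 : ℝ) 1, 0 < f x)
    (hAq : ∀ t ∈ Set.Ioc (0 : ℝ) 1,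
      ((1 / t) * ∫ y in (0 : ℝ)..t, f y) *
        ((1 / t) * ∫ y in (0 : ℝ)..t, f y ^ (-(1 / (q - 1)))) ^ (q - 1) ≤ M) :
    ∀ t ∈ Set.Ioc (0 : ℝ) 1,
      (1 - p ^ (1 / (q - 1)) * ((q - p) / (q - 1)) * M ^ (1 / (q - 1))) *
          ((1 / t) * ∫ s in (0 : ℝ)..t, f s ^ (-(1 / (q - 1))) *
            ((1 / s) * ∫ y in (0 : ℝ)..s, f y) ^ (-(1 / (p - 1)) + 1 / (q - 1)))
        ≤ M ^ (1 / (p - 1)) * ((p - 1) / (q - 1)) *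
            (M ^ (1 / (q - 1))) ^ (-((q - p) / (p - 1))) *
            ((1 / t) * ∫ y in (0 : ℝ)..t, f y) ^ (-(1 / (p - 1))) := by
  have hq : 1 < q := hp.trans hpq
  have hp1 : 0 < p - 1 := by linarith
  have hq1 : 0 < q - 1 := by linarith
  set α := 1 / (q - 1) with hα
  set β := 1 / (p - 1) with hβ
  have hα0 : 0 < α := by positivity
  have hβ0 : 0 < β := by positivity
  have hαβ : α < β := one_div_lt_one_div_of_lt hp1 (by linarith)
  have hδ0 : 0 < β - α := by linarith
  have hM0 : 0 < M := by linarith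
  have hgi : IntervalIntegrable (fun y => f y ^ (-α)) volume 0 1 := by
    rw [intervalIntegrable_iff_integrableOn_Ioo_of_le zero_le_one]
    have hone : IntegrableOn (fun _ : ℝ => ε ^ (-α)) (Ioo 0 1) := by simp
    refine Integrable.mono' hone (hfm.pow_const _).aestronglyMeasurable ?_
    refine (ae_restrict_iff' measurableSet_Ioo).2 (Filter.Eventually.of_forall fun s hs => ?_)
    have h1 := hlb s ⟨hs.1.le, hs.2⟩
    rw [Real.norm_of_nonneg (Real.rpow_nonneg (by linarith) _)]
    exact Real.rpow_le_rpow_of_nonpos hε h1 (by linarith)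
  have hfi1 : IntervalIntegrable f volume 0 1 :=
    (intervalIntegrable_iff_integrableOn_Ioc_of_le zero_le_one).2
      (integrable_aux q M hq f hmono hpos hgi hAq)
  have hsubi : ∀ {h : ℝ → ℝ}, IntervalIntegrable h volume 0 1 → ∀ u, 0 ≤ u → u ≤ 1 →
      IntervalIntegrable h volume 0 u := by
    intro h hh u hu0 hu1
    refine hh.mono_set ?_
    rw [uIcc_of_le hu0, uIcc_of_le zero_le_one]
    exact Icc_subset_Icc_right hu1
  intro t ht
  set F : ℝ → ℝ := fun s => (1 / s) * ∫ y in (0 : ℝ)..s, f y with hF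
  set G : ℝ → ℝ := fun s => (1 / s) * ∫ y in (0 : ℝ)..s, f y ^ (-α) with hG
  have hcont : ∀ {h : ℝ → ℝ}, IntervalIntegrable h volume 0 1 →
      ContinuousOn (fun s => (1 / s) * ∫ y in (0 : ℝ)..s, h y) (Ioc 0 t) := by
    intro h hh
    have h1 := intervalIntegral.continuousOn_primitive_interval' hh left_mem_uIcc
    rw [uIcc_of_le zero_le_one] at h1
    refine ContinuousOn.mul ?_ (h1.mono fun x hx => ⟨hx.1.le, hx.2.trans ht.2⟩)
    exact continuousOn_const.div continuousOn_id fun x hx => hx.1.ne'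
  have hFε : ∀ s ∈ Ioc 0 t, ε ≤ F s := by
    intro s hs
    have hs1 : s ≤ 1 := hs.2.trans ht.2
    have a1 : ∫ y in (0:ℝ)..s, ε ≤ ∫ y in (0:ℝ)..s, f y := by
      refine integral_mono_on_of_le_Ioo hs.1.le (by simp) (hsubi hfi1 s hs.1.le hs1) ?_
      intro x hx
      exact hlb x ⟨hx.1.le, hx.2.trans_le hs1⟩
    simp only [intervalIntegral.integral_const, sub_zero, smul_eq_mul] at a1
    simp only [hF]
    rw [one_div_mul_eq_div, le_div_iff₀ hs.1]
    linarith
  have hFf : ∀ s ∈ Ioo 0 t, F s ≤ f s := by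
    intro s hs
    have hs1 : s < 1 := hs.2.trans_le ht.2
    have a1 : ∫ y in (0:ℝ)..s, f y ≤ ∫ y in (0:ℝ)..s, f s := by
      refine integral_mono_on_of_le_Ioo hs.1.le (hsubi hfi1 s hs.1.le hs1.le) (by simp) ?_
      intro x hx
      exact hmono ⟨hx.1.le, hx.2.trans hs1⟩ ⟨hs.1.le, hs1⟩ hx.2.le
    simp only [intervalIntegral.integral_const, sub_zero, smul_eq_mul] at a1
    simp only [hF]
    rw [one_div_mul_eq_div, div_le_iff₀ hs.1]
    linarith
  have hG0 : ∀ s ∈ Ioc 0 t, 0 ≤ G s := by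
    intro s hs
    have hs1 : s ≤ 1 := hs.2.trans ht.2
    have a1 : ∫ y in (0:ℝ)..s, (0:ℝ) ≤ ∫ y in (0:ℝ)..s, f y ^ (-α) := by
      refine integral_mono_on_of_le_Ioo hs.1.le (by simp) (hsubi hgi s hs.1.le hs1) ?_
      intro x hx
      exact Real.rpow_nonneg (hpos x ⟨hx.1.le, hx.2.trans_le hs1⟩).le _
    simp only [intervalIntegral.integral_zero] at a1
    exact mul_nonneg (one_div_nonneg.2 hs.1.le) a1
  have hGle : ∀ s ∈ Ioc 0 t, G s ≤ M ^ α * F s ^ (-α) := by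
    intro s hs
    have hA : F s * G s ^ (q - 1) ≤ M := hAq s ⟨hs.1, hs.2.trans ht.2⟩
    have hFs : 0 < F s := hε.trans_le (hFε s hs)
    have h1 : G s ^ (q - 1) ≤ M / F s := by
      rw [le_div_iff₀ hFs]; linarith
    have h2 := Real.rpow_le_rpow (Real.rpow_nonneg (hG0 s hs) _) h1 hα0.le
    rw [← Real.rpow_mul (hG0 s hs), show (q - 1) * α = 1 by rw [hα]; field_simp,
      Real.rpow_one, Real.div_rpow hM0.le hFs.le] at h2
    rwa [Real.rpow_neg hFs.le, ← div_eq_mul_inv]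
  have hca : ∀ s ∈ Ioo 0 t \ {x | x ∈ Ico (0:ℝ) 1 ∧ ¬ContinuousWithinAt f (Ico 0 1) x},
      ContinuousAt f s := by
    intro s hs
    have hs1 : s < 1 := hs.1.2.trans_le ht.2
    have : ContinuousWithinAt f (Ico 0 1) s := by
      by_contra hcon
      exact hs.2 ⟨⟨hs.1.1.le, hs1⟩, hcon⟩
    exact this.continuousAt (Ico_mem_nhds hs.1.1 hs1)
  have key := core_aux α β (β - α) p (M ^ α) ε t hα0 hδ0 (by ring)
    (by rw [hβ]; simp) (by positivity) hε ht.1 f F G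
    {x | x ∈ Ico (0:ℝ) 1 ∧ ¬ContinuousWithinAt f (Ico 0 1) x}
    hmono.countable_not_continuousWithinAt hfm
    ((intervalIntegrable_iff_integrableOn_Ioo_of_le ht.1.le).1 (hsubi hfi1 t ht.1.le ht.2))
    (hcont hfi1) (hcont hgi) hFε hFf hG0 hGle ?_ ?_
  · have e1 : (β - α) / β = (q - p) / (q - 1) := by rw [hα, hβ]; field_simp; ring
    have e2 : α / β = (p - 1) / (q - 1) := by rw [hα, hβ]; field_simp
    have e3 : M ^ β * ((p - 1) / (q - 1)) * (M ^ α) ^ (-((q - p) / (p - 1)))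
        = M ^ α * ((p - 1) / (q - 1)) := by
      rw [← Real.rpow_mul hM0.le, mul_right_comm, ← Real.rpow_add hM0]
      congr 2
      rw [hα, hβ]; field_simp; ring
    rw [e1, e2, neg_sub] at key
    rw [e3, neg_add_eq_sub, mul_left_comm, one_div_mul_eq_div, div_le_iff₀ ht.1]
    linarith
  · intro s hs
    have hs0 : s ≠ 0 := hs.1.1.ne'
    have d1 := integral_hasDerivAt_right (hsubi hfi1 s hs.1.1.le (hs.1.2.le.trans ht.2))
      (hfm.stronglyMeasurable.stronglyMeasurableAtFilter) (hca s hs)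
    have d2 := (hasDerivAt_inv hs0).mul d1
    refine (d2.congr_of_eventuallyEq (Filter.Eventually.of_forall fun x => ?_)).congr_deriv ?_
    · simp [hF]
    · simp only [hF]; field_simp; ring
  · intro s hs
    have hs0 : s ≠ 0 := hs.1.1.ne'
    have hs1 : s < 1 := hs.1.2.trans_le ht.2
    have d1 := integral_hasDerivAt_right (hsubi hgi s hs.1.1.le hs1.le)
      ((hfm.pow_const (-α)).stronglyMeasurable.stronglyMeasurableAtFilter)
      ((hca s hs).rpow_const (Or.inl (hpos s ⟨hs.1.1.le, hs1⟩).ne'))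
    refine d1.congr_of_eventuallyEq ?_
    filter_upwards [Ioi_mem_nhds hs.1.1] with x hx
    have : x ≠ 0 := (mem_Ioi.1 hx).ne'
    simp only [hG]
    field_simp
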